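/- Let R be a commutative Noetherian ring. Define a relation < on finite lists of elements of R by: α < β if and only if either β is a strict extension of α (β extends α by at least one element), or there exists a list γ with α ≺ γ such that β is an extension of γ. Then < is well-founded on independent lists: there is no infinite sequence α_0 < α_1 < α_2 < ⋯ of independent lists (equivalently, every independent list is accessible for the relation < restricted to independent lists). -/

import Mathlib

/-- The annihilator ideal of an element `v`: `{x | v * x = 0}`. -/
def ann {R : Type*} [CommRing R] (v : R) : Ideal R where
  carrier := {x | v * x = 0}
  add_mem' := by
    intro a b ha hb
    simp only [Set.mem_setOf_eq] at *
    rw [mul_add, ha, hb, add_zero]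
  zero_mem' := by simp
  smul_mem' := by
    intro c x hx
    simp only [Set.mem_setOf_eq, smul_eq_mul] at *
    rw [mul_comm c x, ← mul_assoc, hx, zero_mul]

/-- The relation `α ≺ β` on finite lists: `β = (w_1, ..., w_m)` with `m ≤ length α`,
`w_i = v_i` for `i < m`, and `ann v_m ⊊ ann w_m`, i.e. `α = γ ++ v :: δ`,
`β = γ ++ [w]` with `ann v ⊊ ann w`. -/
def Prec {R : Type*} [CommRing R] (α β : List R) : Prop :=
  ∃ (γ δ : List R) (v w : R), α = γ ++ v :: δ ∧ β = γ ++ [w] ∧ ann v < ann w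

/-- A list is independent if for each position `k`, the intersection of the annihilators
of the other entries is not contained in the annihilator of the `k`-th entry. -/
def IndepList {R : Type*} [CommRing R] (l : List R) : Prop :=
  ∀ k : Fin l.length,
    ¬ (⨅ i : {i : Fin l.length // i ≠ k}, ann (l.get i.1)) ≤ ann (l.get k)

/-- The lexicographic relation: `α < β` iff `β` is a strict extension of `α`, or `β` is
an extension of some `γ` with `α ≺ γ`. -/
def LexLt {R : Type*} [CommRing R] (α β : List R) : Prop :=
  (α <+: β ∧ α ≠ β) ∨ ∃ γ : List R, Prec α γ ∧ γ <+: β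

theorem mem_ann_iff {R : Type*} [CommRing R] (v x : R) : x ∈ ann v ↔ v * x = 0 := Iff.rfl

def GoodList {R : Type*} [CommRing R] (l : List R) : Prop :=
  ∀ γ w, γ ++ [w] <+: l → w ∉ Ideal.span {x | x ∈ γ}

theorem GoodList.of_prefix {R : Type*} [CommRing R] {l m : List R} (h : GoodList l)
    (hm : m <+: l) : GoodList m := fun γ w hp => h γ w (hp.trans hm)

theorem IndepList.good {R : Type*} [CommRing R] {l : List R} (h : IndepList l) : GoodList l := by
  rintro γ w ⟨δ, rfl⟩ hw
  have hk : γ.length < (γ ++ [w] ++ δ).length := by simp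
  refine h ⟨γ.length, hk⟩ ?_
  intro x hx
  have hg : (γ ++ [w] ++ δ).get ⟨γ.length, hk⟩ = w := by simp
  rw [hg, mem_ann_iff, mul_comm]
  have hle : Ideal.span {y | y ∈ γ} ≤ ann x := by
    rw [Ideal.span_le]
    intro y hy
    obtain ⟨i, hi, rfl⟩ := List.getElem_of_mem hy
    have hi' : i < (γ ++ [w] ++ δ).length := by simp; omega
    have := (Ideal.mem_iInf.mp hx) ⟨⟨i, hi'⟩, by simp; omega⟩
    rw [mem_ann_iff] at this
    have e : (γ ++ [w] ++ δ).get ⟨i, hi'⟩ = γ[i] := by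
      simp [List.getElem_append_left, hi]
    rw [e] at this
    change x * γ[i] = 0
    rw [mul_comm]; exact this
  exact hle hw

theorem prec_snoc {R : Type*} [CommRing R] {γ τ : List R} {w : R} (h : Prec (γ ++ [w]) τ) :
    Prec γ τ ∨ ∃ w', τ = γ ++ [w'] ∧ ann w < ann w' := by
  obtain ⟨a, δ, v, w', h1, h2, h3⟩ := h
  rcases List.eq_nil_or_concat δ with rfl | ⟨δ', z, rfl⟩
  · obtain ⟨rfl, h5⟩ := List.append_inj' h1 rfl
    obtain rfl : w = v := by simpa using h5
    exact Or.inr ⟨w', h2, h3⟩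
  · left
    have h1' : γ ++ [w] = (a ++ v :: δ') ++ [z] := by simpa using h1
    obtain ⟨rfl, -⟩ := List.append_inj' h1' rfl
    exact ⟨a, δ', v, w', rfl, h2, h3⟩

theorem acc_ext {R : Type*} [CommRing R] [IsNoetherianRing R] (I : Ideal R) :
    ∀ γ : List R, Ideal.span {x | x ∈ γ} = I →
      (∀ τ β, Prec γ τ → τ <+: β → GoodList β →
        Acc (fun β α : List R => GoodList β ∧ LexLt α β) β) →
      ∀ β, γ <+: β → GoodList β → Acc (fun β α : List R => GoodList β ∧ LexLt α β) β := by
  induction I using WellFoundedGT.induction with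
  | ind I ih =>
  intro γ hI H
  have key : ∀ J : Ideal R, ∀ w, ann w = J → ∀ β, γ ++ [w] <+: β → GoodList β →
      Acc (fun β α : List R => GoodList β ∧ LexLt α β) β := by
    intro J
    induction J using WellFoundedGT.induction with
    | ind J ihJ =>
    intro w hw β hβ hG
    refine ih _ ?_ (γ ++ [w]) rfl ?_ β hβ hG
    · subst hI
      refine lt_of_le_of_ne (Ideal.span_mono fun x hx => ?_) fun he => ?_
      · simp only [Set.mem_setOf_eq] at hx ⊢
        simp [hx]
      · apply hG γ w hβ
        rw [he]
        exact Ideal.subset_span (by simp)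
    · intro τ β' hp hτ hG'
      rcases prec_snoc hp with h | ⟨w', rfl, hlt⟩
      · exact H τ β' h hτ hG'
      · exact ihJ _ (hw ▸ hlt) w' rfl β' hτ hG'
  have strict : ∀ β, γ <+: β → γ ≠ β → GoodList β →
      Acc (fun β α : List R => GoodList β ∧ LexLt α β) β := by
    rintro β ⟨δ, rfl⟩ hne hG
    cases δ with
    | nil => simp at hne
    | cons w δ => exact key _ w rfl _ ⟨δ, by simp⟩ hG
  intro β hβ hG
  by_cases hne : γ = β
  · subst hne
    refine Acc.intro _ ?_
    rintro β' ⟨hG', ⟨h1, h2⟩ | ⟨τ, h1, h2⟩⟩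
    · exact strict β' h1 h2 hG'
    · exact H τ β' h1 h2 hG'
  · exact strict β hβ hne hG

/-- In a commutative Noetherian ring, the lexicographic relation `<` is well-founded on
independent lists of nonzero elements. -/
theorem lexLt_wellFounded_on_independent {R : Type*} [CommRing R] [IsNoetherianRing R] :
    WellFounded (fun β α : {l : List R // (∀ x ∈ l, x ≠ 0) ∧ IndepList l} =>
      LexLt α.1 β.1) := by
  refine Subrelation.wf (r := InvImage (fun β α : List R => GoodList β ∧ LexLt α β) Subtype.val)
    (fun {β α} h => ⟨β.2.2.good, h⟩) ⟨fun α => ?_⟩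
  refine InvImage.accessible _ (acc_ext _ [] rfl ?_ α.1 List.nil_prefix α.2.2.good)
  rintro τ β ⟨a, δ, v, w, h, -⟩
  simp at h
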